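/- Suppose n is odd, and let i, j, p, q be nonnegative integers with 2i+j ≤ n and 2p+q ≤ 2n. Then the product O(n−2i−j, i, j)·O(2n−2p−q, p, q) in A is given as follows. If j is even and q is odd: it equals λ^{p+q}·O(n−2i−j+q−1, i+p+1, 2n−2p−q+j−1) + O(3n−j−2p−q, p−i, q+j+2i) when p ≥ i, and λ^{p+q}·O(n−2i−j+q−1, i+p+1, 2n−2p−q+j−1) + O(3n−2i−j−q+1, i−p−1, j+2p+q+1) when p < i. If j and q are both odd: it equals O(3n−2i−j−2p−q−1, i+p+1, j+q−1) + λ^{p+q}·O(n−j+q, p−i, 2n−2p−q+j+2i) when p ≥ i, and O(3n−2i−j−2p−q−1, i+p+1, j+q−1) + λ^{p+q}·O(n−2i−j+q+2p+1, i−p−1, 2n−q+j+1) when p < i. If j and q are both even: it equals O(3n−2i−j−2p−q, i+p, j+q) + λ^{p+q}·O(n−2i−j+q+2p, i−p, 2n+j−q) when p ≤ i, and O(3n−2i−j−2p−q, i+p, j+q) + λ^{p+q}·O(n−j+q+1, p−i−1, 2n+2i+j−2p−q+1) when p > i. If j is odd and q is even: it equals λ^{p+q}·O(n−2i−j+q,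 i+p, 2n−2p−q+j) + O(3n−2i−j−q, i−p, q+j+2p) when p ≤ i, and λ^{p+q}·O(n−2i−j+q, i+p, 2n−2p−q+j) + O(3n−2p−j−q+1, p−i−1, j+2i+q+1) when p > i. -/

import Mathlib

/-!
Setting: `lam n = exp(2πi/n)` is a primitive `n`-th root of unity in `ℂ`.
`DUAlg` is the graded down-up algebra `A(0,1) = ℂ⟨u,d⟩/(d²u - ud², du² - u²d)`,
with generators `uGen`, `dGen`.  The automorphism `g` (of order `2n`) is
determined by `g u = d`, `g d = lam n • u`, and generates the cyclic group `G`,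
so that the fixed subring `A^G` is `{a | g a = a}`.  The orbit sum is
`orbitSum n a b c = u^a (du)^b d^c + (lam n)^(b+c) • (d^a (ud)^b u^c)`.
-/

noncomputable section

/-- `lam n = exp(2πi/n)`, a primitive `n`-th root of unity. -/
def lam (n : ℕ) : ℂ := Complex.exp (2 * (Real.pi : ℂ) * Complex.I / (n : ℂ))

/-- The defining relations of the down-up algebra `A(0,1)`:
`d²u = ud²` and `du² = u²d` (here `0` plays the role of `u`, `1` of `d`). -/
inductive DownUpRel : FreeAlgebra ℂ (Fin 2) → FreeAlgebra ℂ (Fin 2) → Prop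
  | rel1 : DownUpRel (FreeAlgebra.ι ℂ 1 * FreeAlgebra.ι ℂ 1 * FreeAlgebra.ι ℂ 0)
      (FreeAlgebra.ι ℂ 0 * FreeAlgebra.ι ℂ 1 * FreeAlgebra.ι ℂ 1)
  | rel2 : DownUpRel (FreeAlgebra.ι ℂ 1 * FreeAlgebra.ι ℂ 0 * FreeAlgebra.ι ℂ 0)
      (FreeAlgebra.ι ℂ 0 * FreeAlgebra.ι ℂ 0 * FreeAlgebra.ι ℂ 1)

/-- The graded down-up algebra `A(0,1)`. -/
abbrev DUAlg : Type := RingQuot DownUpRel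

/-- The generator `u` of `A(0,1)`. -/
def uGen : DUAlg := RingQuot.mkAlgHom ℂ DownUpRel (FreeAlgebra.ι ℂ 0)

/-- The generator `d` of `A(0,1)`. -/
def dGen : DUAlg := RingQuot.mkAlgHom ℂ DownUpRel (FreeAlgebra.ι ℂ 1)

/-- Orbit sum `O(a,b,c) = u^a (du)^b d^c + λ^(b+c) d^a (ud)^b u^c`. -/
def orbitSum (n a b c : ℕ) : DUAlg :=
  uGen ^ a * (dGen * uGen) ^ b * dGen ^ c
    + (lam n ^ (b + c)) • (dGen ^ a * (uGen * dGen) ^ b * uGen ^ c)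

/-- Squares of `u` and `d` are central. -/
def SqCentral (u d : DUAlg) : Prop :=
  (∀ z, u * u * z = z * (u * u)) ∧ (∀ z, d * d * z = z * (d * d))

lemma SqCentral.swap {u d : DUAlg} (h : SqCentral u d) : SqCentral d u := ⟨h.2, h.1⟩

lemma central_of_gens (c : DUAlg) (hu : c * uGen = uGen * c) (hd : c * dGen = dGen * c)
    (z : DUAlg) : c * z = z * c := by
  obtain ⟨w, rfl⟩ := RingQuot.mkAlgHom_surjective ℂ DownUpRel z
  induction w using FreeAlgebra.induction with
  | grade0 r => rw [AlgHom.commutes]; exact (Algebra.commutes r c).symm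
  | grade1 x => 
    fin_cases x
    · exact hu
    · exact hd
  | mul a b ha hb => rw [map_mul, ← mul_assoc, ha, mul_assoc, hb, mul_assoc]
  | add a b ha hb => rw [map_add, mul_add, ha, hb, add_mul]

lemma rel_one : dGen * dGen * uGen = uGen * dGen * dGen := by
  have := RingQuot.mkAlgHom_rel ℂ DownUpRel.rel1
  simp only [map_mul] at this
  exact this

lemma rel_two : dGen * uGen * uGen = uGen * uGen * dGen := by
  have := RingQuot.mkAlgHom_rel ℂ DownUpRel.rel2
  simp only [map_mul] at this
  exact this

lemma sqCentral_gen : SqCentral uGen dGen := by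
  constructor
  · apply central_of_gens
    · rw [mul_assoc]
    · rw [← rel_two, mul_assoc]
  · apply central_of_gens
    · rw [rel_one, mul_assoc]
    · rw [mul_assoc]

section mono
variable {u d : DUAlg}

lemma SqCentral.evu (h : SqCentral u d) {k : ℕ} (hk : Even k) (z : DUAlg) :
    Commute (u ^ k) z := by
  obtain ⟨k, rfl⟩ := hk
  rw [← two_mul, pow_mul, pow_two]
  exact Commute.pow_left (h.1 z) k

lemma SqCentral.evd (h : SqCentral u d) {k : ℕ} (hk : Even k) (z : DUAlg) :
    Commute (d ^ k) z := h.swap.evu hk z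

lemma SqCentral.xu (h : SqCentral u d) (k : ℕ) : (d * u) ^ k * u = u * (u * d) ^ k := by
  have : SemiconjBy u (u * d) (d * u) := by
    unfold SemiconjBy
    rw [← mul_assoc, h.1, mul_assoc]
  exact (this.pow_right k).eq.symm

lemma SqCentral.dx (h : SqCentral u d) (k : ℕ) : d * (d * u) ^ k = (u * d) ^ k * d := by
  have : SemiconjBy d (d * u) (u * d) := by
    unfold SemiconjBy
    rw [← mul_assoc, h.2, mul_assoc]
  exact (this.pow_right k).eq

lemma SqCentral.dy (k : ℕ) : d * (u * d) ^ k = (d * u) ^ k * d := by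
  have : SemiconjBy d (u * d) (d * u) := by
    unfold SemiconjBy
    rw [mul_assoc]
  exact (this.pow_right k).eq

lemma SqCentral.yu (k : ℕ) : (u * d) ^ k * u = u * (d * u) ^ k := by
  exact (SqCentral.dy (u := d) (d := u) k).symm

lemma SqCentral.x_mul_y (h : SqCentral u d) : (d * u) * (u * d) = u ^ 2 * d ^ 2 := by
  rw [show (d * u) * (u * d) = d * (u * u) * d by simp only [mul_assoc], ← h.1, pow_two, pow_two]
  simp only [mul_assoc]

lemma SqCentral.y_mul_x (h : SqCentral u d) : (u * d) * (d * u) = u ^ 2 * d ^ 2 := by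
  rw [h.swap.x_mul_y]
  exact h.evd even_two _

lemma SqCentral.xyc (h : SqCentral u d) : Commute (d * u) (u * d) :=
  h.x_mul_y.trans h.y_mul_x.symm

lemma SqCentral.xy (h : SqCentral u d) (k : ℕ) :
    (d * u) ^ k * (u * d) ^ k = u ^ (2 * k) * d ^ (2 * k) := by
  rw [← h.xyc.mul_pow, h.x_mul_y, (h.evu even_two _).mul_pow, pow_mul, pow_mul]

lemma SqCentral.y_succ (k : ℕ) : (u * d) ^ (k + 1) = u * (d * u) ^ k * d := by
  rw [pow_succ, ← mul_assoc, SqCentral.yu]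

-- core identities
lemma SqCentral.c5 (h : SqCentral u d) (p r : ℕ) :
    (d * u) ^ (p + r) * (u * d) ^ p = u ^ (2 * p) * (d * u) ^ r * d ^ (2 * p) := by
  rw [add_comm, pow_add, mul_assoc, h.xy, ← mul_assoc, ← (h.evu (even_two_mul p) _).eq]

lemma SqCentral.c6 (h : SqCentral u d) (i r : ℕ) :
    (d * u) ^ i * (u * d) ^ (i + r + 1)
      = u ^ (2 * i + 1) * (d * u) ^ r * d ^ (2 * i + 1) := by
  rw [add_assoc, pow_add (u * d), ← mul_assoc, h.xy, SqCentral.y_succ, mul_assoc,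
    (h.evd (even_two_mul i) _).eq, pow_succ u, pow_succ' d, (h.evd (even_two_mul i) d).eq.symm]
  simp only [mul_assoc, (h.evd (even_two_mul i) d).eq]

lemma SqCentral.c1 (h : SqCentral u d) (i r : ℕ) :
    (d * u) ^ i * u * (d * u) ^ (i + r) = u ^ (2 * i + 1) * (d * u) ^ r * d ^ (2 * i) := by
  rw [h.xu, mul_assoc, ← (h.xyc.pow_pow (i + r) i).eq, h.c5, pow_succ']
  simp only [mul_assoc]

lemma SqCentral.c2 (h : SqCentral u d) (p r : ℕ) :
    (d * u) ^ (p + r + 1) * u * (d * u) ^ p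
      = u ^ (2 * p + 2) * (d * u) ^ r * d ^ (2 * p + 1) := by
  rw [h.xu, mul_assoc, ← (h.xyc.pow_pow p (p + r + 1)).eq, h.c6, pow_succ' u (2 * p + 1)]
  simp only [mul_assoc]

lemma SqCentral.c3 (h : SqCentral u d) (p r : ℕ) :
    (d * u) ^ (p + r) * d * (d * u) ^ p = u ^ (2 * p) * (d * u) ^ r * d ^ (2 * p + 1) := by
  rw [mul_assoc, h.dx, ← mul_assoc, h.c5, pow_succ]
  simp only [mul_assoc]

lemma SqCentral.c4 (h : SqCentral u d) (i r : ℕ) :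
    (d * u) ^ i * d * (d * u) ^ (i + r + 1)
      = u ^ (2 * i + 1) * (d * u) ^ r * d ^ (2 * i + 2) := by
  rw [mul_assoc, h.dx, ← mul_assoc, h.c6, pow_succ d (2 * i + 1)]
  simp only [mul_assoc]

/-- Reorganising central factors. -/
lemma reorg (c e a x f g y b : DUAlg) (hc : ∀ z, Commute c z) (he : ∀ z, Commute e z) :
    a * x * (e * f) * (c * g) * y * b = a * c * (x * f * g * y) * (e * b) := by
  have h1 : ∀ z, e * z = z * e := fun z => (he z).eq
  have h2 : ∀ z, c * z = z * c := fun z => (hc z).eq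
  calc a * x * (e * f) * (c * g) * y * b
      = a * x * (e * (f * (c * (g * y)))) * b := by simp only [mul_assoc]
    _ = a * (x * ((f * (c * (g * y))) * e)) * b := by rw [h1]; simp only [mul_assoc]
    _ = a * (x * f * (c * (g * y * e))) * b := by simp only [mul_assoc]
    _ = a * ((c * (x * f)) * (g * y * e)) * b := by
        rw [h2 (x * f)]; simp only [mul_assoc]
    _ = _ := by simp only [mul_assoc]

/-- Reorganising central factors, second form. -/
lemma reorg2 (c e a x f g y : DUAlg) (hc : ∀ z, Commute c z) (he : ∀ z, Commute e z) :
    a * x * (e * f) * y * (c * g) = a * c * (x * f * y * g) * e := by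
  have h1 : ∀ z, e * z = z * e := fun z => (he z).eq
  have h2 : ∀ z, c * z = z * c := fun z => (hc z).eq
  calc a * x * (e * f) * y * (c * g)
      = a * (x * (e * (f * (y * (c * g))))) := by simp only [mul_assoc]
    _ = a * (x * f * y * c * g * e) := by rw [h1]; simp only [mul_assoc]
    _ = a * (c * (x * f * y) * g * e) := by rw [h2 (x * f * y)]
    _ = _ := by simp only [mul_assoc]

variable {A i j B p q a b c : ℕ}

/-- Normal form of `X * Y`. -/
abbrev NF1 (u d : DUAlg) (A i j B p q a b c : ℕ) : Prop :=
  u ^ A * (d * u) ^ i * d ^ j * (u ^ B * (d * u) ^ p * d ^ q) = u ^ a * (d * u) ^ b * d ^ c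

/-- Normal form of `X * Y'`. -/
abbrev NF2 (u d : DUAlg) (A i j B p q a b c : ℕ) : Prop :=
  u ^ A * (d * u) ^ i * d ^ j * (d ^ B * (u * d) ^ p * u ^ q) = u ^ a * (d * u) ^ b * d ^ c

lemma nf1_of (h : SqCentral u d) {J K f g s t : ℕ} (hJ : Even J) (hK : Even K)
    (hj : j = J + f) (hB : B = K + g)
    (hcore : (d * u) ^ i * d ^ f * u ^ g * (d * u) ^ p = u ^ s * (d * u) ^ b * d ^ t)
    (ha : a = A + K + s) (hc : c = t + J + q) : NF1 u d A i j B p q a b c := by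
  unfold NF1
  subst hj hB ha hc
  have := reorg (u ^ K) (d ^ J) (u ^ A) ((d * u) ^ i) (d ^ f) (u ^ g) ((d * u) ^ p) (d ^ q)
    (h.evu hK) (h.evd hJ)
  rw [hcore] at this
  simp only [pow_add, mul_assoc] at this ⊢
  exact this

lemma nf2_of (h : SqCentral u d) {J K f g s t : ℕ} (hJ : Even J) (hK : Even K)
    (hj : j + B = J + f) (hB : q = K + g)
    (hcore : (d * u) ^ i * d ^ f * (u * d) ^ p * u ^ g = u ^ s * (d * u) ^ b * d ^ t)
    (ha : a = A + K + s) (hc : c = t + J) : NF2 u d A i j B p q a b c := by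
  unfold NF2
  have := reorg2 (u ^ K) (d ^ J) (u ^ A) ((d * u) ^ i) (d ^ f) (u ^ g) ((u * d) ^ p)
    (h.evu hK) (h.evd hJ)
  rw [hcore, ← pow_add d, ← hj] at this
  subst hB ha hc
  simp only [pow_add, mul_assoc] at this ⊢
  exact this

lemma n1ee (h : SqCentral u d) (hj : Even j) (hB : Even B) (ha : a = A + B) (hb : b = i + p)
    (hc : c = j + q) : NF1 u d A i j B p q a b c :=
  nf1_of h (f := 0) (g := 0) (s := 0) (t := 0) hj hB rfl rfl (by simp [hb, pow_add])
    (by omega) (by omega)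

lemma n1eo_ge (h : SqCentral u d) (hj : Even j) (hB : Odd B) (hb : p = i + b)
    (ha : a = A + B + 2 * i) (hc : c = j + q + 2 * i) : NF1 u d A i j B p q a b c := by
  obtain ⟨K, rfl⟩ := hB
  exact nf1_of h (f := 0) (g := 1) (s := 2 * i + 1) (t := 2 * i)
    hj (even_two_mul K) rfl rfl
    (by rw [pow_zero, mul_one, pow_one, hb]; exact h.c1 i b) (by omega) (by omega)

lemma n1eo_lt (h : SqCentral u d) (hj : Even j) (hB : Odd B) (hb : i = p + b + 1)
    (ha : a = A + B + 2 * p + 1) (hc : c = j + q + 2 * p + 1) :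
    NF1 u d A i j B p q a b c := by
  obtain ⟨K, rfl⟩ := hB
  exact nf1_of h (f := 0) (g := 1) (s := 2 * p + 2) (t := 2 * p + 1)
    hj (even_two_mul K) rfl rfl
    (by rw [pow_zero, mul_one, pow_one, hb]; exact h.c2 p b) (by omega) (by omega)

lemma n1oo (h : SqCentral u d) (hj : Odd j) (hB : Odd B) (hb : b = i + p + 1)
    (ha : a + 1 = A + B) (hc : c + 1 = j + q) : NF1 u d A i j B p q a b c := by
  obtain ⟨K, rfl⟩ := hB
  obtain ⟨J, rfl⟩ := hj
  exact nf1_of h (f := 1) (g := 1) (s := 0) (t := 0) (even_two_mul J) (even_two_mul K) rfl rfl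
    (by rw [show b = i + 1 + p by omega, pow_add _ (i + 1) p, pow_succ (d * u) i]; simp [mul_assoc])
    (by omega) (by omega)

lemma n1oe_le (h : SqCentral u d) (hj : Odd j) (hB : Even B) (hb : i = p + b)
    (ha : a = A + B + 2 * p) (hc : c = j + q + 2 * p) : NF1 u d A i j B p q a b c := by
  obtain ⟨J, rfl⟩ := hj
  exact nf1_of h (f := 1) (g := 0) (s := 2 * p) (t := 2 * p + 1)
    (even_two_mul J) hB rfl rfl
    (by rw [pow_zero, mul_one, pow_one, hb]; exact h.c3 p b) (by omega) (by omega)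

lemma n1oe_gt (h : SqCentral u d) (hj : Odd j) (hB : Even B) (hb : p = i + b + 1)
    (ha : a = A + B + 2 * i + 1) (hc : c = j + q + 2 * i + 1) :
    NF1 u d A i j B p q a b c := by
  obtain ⟨J, rfl⟩ := hj
  exact nf1_of h (f := 1) (g := 0) (s := 2 * i + 1) (t := 2 * i + 2)
    (even_two_mul J) hB rfl rfl
    (by rw [pow_zero, mul_one, pow_one, hb]; exact h.c4 i b) (by omega) (by omega)

lemma n2ee_le (h : SqCentral u d) (hj : Even (j + B)) (hq : Even q) (hb : i = p + b)
    (ha : a = A + q + 2 * p) (hc : c = j + B + 2 * p) : NF2 u d A i j B p q a b c :=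
  nf2_of h (f := 0) (g := 0) (s := 2 * p) (t := 2 * p)
    hj hq rfl rfl
    (by rw [pow_zero, mul_one, pow_zero, mul_one, hb]; exact h.c5 p b) (by omega) (by omega)

lemma n2ee_gt (h : SqCentral u d) (hj : Even (j + B)) (hq : Even q) (hb : p = i + b + 1)
    (ha : a = A + q + 2 * i + 1) (hc : c = j + B + 2 * i + 1) :
    NF2 u d A i j B p q a b c :=
  nf2_of h (f := 0) (g := 0) (s := 2 * i + 1) (t := 2 * i + 1)
    hj hq rfl rfl
    (by rw [pow_zero, mul_one, pow_zero, mul_one, hb]; exact h.c6 i b) (by omega) (by omega)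

lemma n2oe (h : SqCentral u d) (hj : Odd (j + B)) (hq : Even q) (hb : b = i + p)
    (ha : a = A + q) (hc : c = j + B) : NF2 u d A i j B p q a b c := by
  obtain ⟨J, hJ⟩ := hj
  exact nf2_of h (f := 1) (g := 0) (s := 0) (t := 1) (even_two_mul J) hq hJ rfl
    (by rw [hb, pow_one, mul_assoc _ d, SqCentral.dy, pow_add]; simp [mul_assoc])
    (by omega) (by omega)

lemma n2oo (h : SqCentral u d) (hj : Odd (j + B)) (hq : Odd q) (hb : b = i + p + 1)
    (ha : a + 1 = A + q) (hc : c + 1 = j + B) : NF2 u d A i j B p q a b c := by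
  obtain ⟨J, hJ⟩ := hj
  obtain ⟨K, rfl⟩ := hq
  exact nf2_of h (f := 1) (g := 1) (s := 0) (t := 0) (even_two_mul J) (even_two_mul K) hJ rfl
    (by rw [hb, pow_one, mul_assoc _ d, SqCentral.dy, pow_succ (d * u) (i + p), pow_add (d * u) i p]; simp [mul_assoc])
    (by omega) (by omega)

lemma n2eo_ge (h : SqCentral u d) (hj : Even (j + B)) (hq : Odd q) (hb : p = i + b)
    (ha : a = A + q + 2 * i) (hc : c = j + B + 2 * i) : NF2 u d A i j B p q a b c := by
  obtain ⟨K, rfl⟩ := hq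
  exact nf2_of h (f := 0) (g := 1) (s := 2 * i + 1) (t := 2 * i)
    hj (even_two_mul K) rfl rfl
    (by rw [pow_zero, mul_one, pow_one, mul_assoc, SqCentral.yu, ← mul_assoc, hb]
        exact h.c1 i b) (by omega) (by omega)

lemma n2eo_lt (h : SqCentral u d) (hj : Even (j + B)) (hq : Odd q) (hb : i = p + b + 1)
    (ha : a = A + q + 2 * p + 1) (hc : c = j + B + 2 * p + 1) :
    NF2 u d A i j B p q a b c := by
  obtain ⟨K, rfl⟩ := hq
  exact nf2_of h (f := 0) (g := 1) (s := 2 * p + 2) (t := 2 * p + 1)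
    hj (even_two_mul K) rfl rfl
    (by rw [pow_zero, mul_one, pow_one, mul_assoc, SqCentral.yu, ← mul_assoc, hb]
        exact h.c2 p b) (by omega) (by omega)

end mono

lemma lam_pow (n : ℕ) (hn : n ≠ 0) : lam n ^ n = 1 :=
  (Complex.isPrimitiveRoot_exp n hn).pow_eq_one

lemma orbit_mul {n A i j B p q a b c a' b' c' : ℕ} (hn : n ≠ 0)
    (h1 : ∀ u d, SqCentral u d → NF1 u d A i j B p q a b c)
    (h2 : ∀ u d, SqCentral u d → NF2 u d A i j B p q a' b' c')
    (e1 : b + c = i + j + (p + q)) (e2 : p + q + (b' + c') = i + j + 2 * n) :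
    orbitSum n A i j * orbitSum n B p q
      = orbitSum n a b c + lam n ^ (p + q) • orbitSum n a' b' c' := by
  have s := sqCentral_gen
  have e3 : lam n ^ (p + q) * lam n ^ (b' + c') = lam n ^ (i + j) := by
    rw [← pow_add, e2, pow_add, mul_comm 2, pow_mul, lam_pow n hn, one_pow, mul_one]
  have k1 := h1 _ _ s
  have k2 := h2 _ _ s
  have k3 := h1 _ _ s.swap
  have k4 := h2 _ _ s.swap
  unfold NF1 at k1 k3
  unfold NF2 at k2 k4
  unfold orbitSum
  rw [mul_add, add_mul, add_mul, smul_mul_smul_comm, smul_mul_assoc, mul_smul_comm,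
    k1, k2, k3, k4, smul_add, smul_smul, e3, ← pow_add, ← e1]
  abel

/-- For `n` odd, the product of a degree-`n` orbit sum with a degree-`2n` orbit
sum in the down-up algebra `A(0,1)` (Proposition 3.4 of the paper). -/
theorem orbitSum_deg_n_mul_deg_two_n (n : ℕ) (hodd : Odd n)
    (i j p q : ℕ) (hij : 2 * i + j ≤ n) (hpq : 2 * p + q ≤ 2 * n) :
    (Even j → Odd q → p ≥ i →
      orbitSum n (n - 2 * i - j) i j * orbitSum n (2 * n - 2 * p - q) p q =
        (lam n ^ (p + q)) •
            orbitSum n (n - 2 * i - j + q - 1) (i + p + 1) (2 * n - 2 * p - q + j - 1) +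
          orbitSum n (3 * n - j - 2 * p - q) (p - i) (q + j + 2 * i)) ∧
    (Even j → Odd q → p < i →
      orbitSum n (n - 2 * i - j) i j * orbitSum n (2 * n - 2 * p - q) p q =
        (lam n ^ (p + q)) •
            orbitSum n (n - 2 * i - j + q - 1) (i + p + 1) (2 * n - 2 * p - q + j - 1) +
          orbitSum n (3 * n - 2 * i - j - q + 1) (i - p - 1) (j + 2 * p + q + 1)) ∧
    (Odd j → Odd q → p ≥ i →
      orbitSum n (n - 2 * i - j) i j * orbitSum n (2 * n - 2 * p - q) p q =
        orbitSum n (3 * n - 2 * i - j - 2 * p - q - 1) (i + p + 1) (j + q - 1) +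
          (lam n ^ (p + q)) •
            orbitSum n (n - j + q) (p - i) (2 * n - 2 * p - q + j + 2 * i)) ∧
    (Odd j → Odd q → p < i →
      orbitSum n (n - 2 * i - j) i j * orbitSum n (2 * n - 2 * p - q) p q =
        orbitSum n (3 * n - 2 * i - j - 2 * p - q - 1) (i + p + 1) (j + q - 1) +
          (lam n ^ (p + q)) •
            orbitSum n (n - 2 * i - j + q + 2 * p + 1) (i - p - 1) (2 * n - q + j + 1)) ∧
    (Even j → Even q → p ≤ i →
      orbitSum n (n - 2 * i - j) i j * orbitSum n (2 * n - 2 * p - q) p q =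
        orbitSum n (3 * n - 2 * i - j - 2 * p - q) (i + p) (j + q) +
          (lam n ^ (p + q)) •
            orbitSum n (n - 2 * i - j + q + 2 * p) (i - p) (2 * n + j - q)) ∧
    (Even j → Even q → p > i →
      orbitSum n (n - 2 * i - j) i j * orbitSum n (2 * n - 2 * p - q) p q =
        orbitSum n (3 * n - 2 * i - j - 2 * p - q) (i + p) (j + q) +
          (lam n ^ (p + q)) •
            orbitSum n (n - j + q + 1) (p - i - 1) (2 * n + 2 * i + j - 2 * p - q + 1)) ∧
    (Odd j → Even q → p ≤ i →
      orbitSum n (n - 2 * i - j) i j * orbitSum n (2 * n - 2 * p - q) p q =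
        (lam n ^ (p + q)) •
            orbitSum n (n - 2 * i - j + q) (i + p) (2 * n - 2 * p - q + j) +
          orbitSum n (3 * n - 2 * i - j - q) (i - p) (q + j + 2 * p)) ∧
    (Odd j → Even q → p > i →
      orbitSum n (n - 2 * i - j) i j * orbitSum n (2 * n - 2 * p - q) p q =
        (lam n ^ (p + q)) •
            orbitSum n (n - 2 * i - j + q) (i + p) (2 * n - 2 * p - q + j) +
          orbitSum n (3 * n - 2 * p - j - q + 1) (p - i - 1) (j + 2 * i + q + 1)) := by
  have hn : n ≠ 0 := by rintro rfl; simp at hodd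
  obtain ⟨A, hA⟩ : ∃ A, A = n - 2 * i - j := ⟨_, rfl⟩
  obtain ⟨B, hB⟩ : ∃ B, B = 2 * n - 2 * p - q := ⟨_, rfl⟩
  have hBe : Even q → Even B := by
    rintro ⟨k, hk⟩; exact ⟨n - p - k, by omega⟩
  have hBo : Odd q → Odd B := by
    rintro ⟨k, hk⟩; exact ⟨n - p - k - 1, by omega⟩
  rw [← hA, ← hB]
  refine ⟨?_, ?_, ?_, ?_, ?_, ?_, ?_, ?_⟩
  · intro hj hq hp
    have hBq := hBo hq
    have hB0 := hBq.pos
    have hq0 := hq.pos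
    rw [add_comm]
    exact orbit_mul hn
      (fun u d h => n1eo_ge h hj hBq (by omega) (by omega) (by omega))
      (fun u d h => n2oo h (hj.add_odd hBq) hq (by omega) (by omega) (by omega))
      (by omega) (by omega)
  · intro hj hq hp
    have hBq := hBo hq
    have hB0 := hBq.pos
    have hq0 := hq.pos
    rw [add_comm]
    exact orbit_mul hn
      (fun u d h => n1eo_lt h hj hBq (by omega) (by omega) (by omega))
      (fun u d h => n2oo h (hj.add_odd hBq) hq (by omega) (by omega) (by omega))
      (by omega) (by omega)
  · intro hj hq hp
    have hBq := hBo hq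
    have hB0 := hBq.pos
    have hq0 := hq.pos
    exact orbit_mul hn
      (fun u d h => n1oo h hj hBq (by omega) (by omega) (by omega))
      (fun u d h => n2eo_ge h (hj.add_odd hBq) hq (by omega) (by omega) (by omega))
      (by omega) (by omega)
  · intro hj hq hp
    have hBq := hBo hq
    have hB0 := hBq.pos
    have hq0 := hq.pos
    exact orbit_mul hn
      (fun u d h => n1oo h hj hBq (by omega) (by omega) (by omega))
      (fun u d h => n2eo_lt h (hj.add_odd hBq) hq (by omega) (by omega) (by omega))
      (by omega) (by omega)
  · intro hj hq hp
    have hBq := hBe hq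
    exact orbit_mul hn
      (fun u d h => n1ee h hj hBq (by omega) (by omega) (by omega))
      (fun u d h => n2ee_le h (hj.add hBq) hq (by omega) (by omega) (by omega))
      (by omega) (by omega)
  · intro hj hq hp
    have hBq := hBe hq
    exact orbit_mul hn
      (fun u d h => n1ee h hj hBq (by omega) (by omega) (by omega))
      (fun u d h => n2ee_gt h (hj.add hBq) hq (by omega) (by omega) (by omega))
      (by omega) (by omega)
  · intro hj hq hp
    have hBq := hBe hq
    rw [add_comm]
    exact orbit_mul hn
      (fun u d h => n1oe_le h hj hBq (by omega) (by omega) (by omega))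
      (fun u d h => n2oe h (hj.add_even hBq) hq (by omega) (by omega) (by omega))
      (by omega) (by omega)
  · intro hj hq hp
    have hBq := hBe hq
    rw [add_comm]
    exact orbit_mul hn
      (fun u d h => n1oe_gt h hj hBq (by omega) (by omega) (by omega))
      (fun u d h => n2oe h (hj.add_even hBq) hq (by omega) (by omega) (by omega))
      (by omega) (by omega)
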